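/- Every pair (ᾱ, β̄) in the achievable storage-retrieval rate region R of the (2,2) PIR problem satisfies ᾱ + β̄ ≥ 2. -/

import Mathlib

open scoped BigOperators

namespace PIR

/-- Messages are length-`L` vectors over `F_2`. -/
abbrev Msg (L : ℕ) := Fin L → ZMod 2

/-- A (2,2) PIR code (without the correctness condition) with message length `L`
and query alphabet `Q`.  The two messages are independent and uniform on `F_2^L`;
the queries are independent of the messages (built into the model: the query
distribution `P k` for desired message `k` does not depend on the messages). -/
structure CodeBase (L : ℕ) (Q : Type) [Fintype Q] [DecidableEq Q] where
  /-- query distribution for desired message index `k` -/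
  P : Fin 2 → Q × Q → ℝ
  P_nonneg : ∀ k qq, 0 ≤ P k qq
  P_sum : ∀ k, ∑ qq : Q × Q, P k qq = 1
  /-- number of stored `F_2` symbols at database `n` -/
  stor : Fin 2 → ℕ
  /-- storage encoders -/
  phi : (n : Fin 2) → Msg L × Msg L → (Fin (stor n) → ZMod 2)
  /-- answer lengths -/
  blen : Fin 2 → Q → ℕ
  /-- deterministic answer functions -/
  ans : (n : Fin 2) → (q : Q) → (Fin (stor n) → ZMod 2) → (Fin (blen n q) → ZMod 2)
  /-- decoding functions -/
  dec : (k : Fin 2) → (q₁ q₂ : Q) → (Fin (blen 0 q₁) → ZMod 2) →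
      (Fin (blen 1 q₂) → ZMod 2) → Msg L
  /-- Privacy: for each database `n`, the joint distribution of
  `(Q_n^{[k]}, A_n^{[k]}, S_n)` is the same for `k = 1, 2`.  Since the answer
  `A_n` is the fixed deterministic function `ans` of `(Q_n, S_n)` (not
  depending on `k`), this is expressed as equality of the joint distributions of
  `(Q_n, S_n)` (messages uniform, queries independent of messages). -/
  privacy : ∀ (n : Fin 2) (q : Q) (s : Fin (stor n) → ZMod 2),
    (∑ qq : Q × Q, if (if n = 0 then qq.1 else qq.2) = q then P 0 qq else 0) *
      ((Finset.univ.filter (fun w : Msg L × Msg L => phi n w = s)).card : ℝ) =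
    (∑ qq : Q × Q, if (if n = 0 then qq.1 else qq.2) = q then P 1 qq else 0) *
      ((Finset.univ.filter (fun w : Msg L × Msg L => phi n w = s)).card : ℝ)

variable {L : ℕ} {Q : Type} [Fintype Q] [DecidableEq Q]

/-- The desired message `W_k`. -/
def target (k : Fin 2) (w : Msg L × Msg L) : Msg L := if k = 0 then w.1 else w.2

/-- The decoder output `Ŵ_k` when the realized queries are `qq` and the messages `w`. -/
def retrieved (C : CodeBase L Q) (k : Fin 2) (qq : Q × Q) (w : Msg L × Msg L) : Msg L :=
  C.dec k qq.1 qq.2 (C.ans 0 qq.1 (C.phi 0 w)) (C.ans 1 qq.2 (C.phi 1 w))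

/-- Zero-error correctness: `Ŵ_k = W_k` for all realizations. -/
def IsZeroError (C : CodeBase L Q) : Prop :=
  ∀ (k : Fin 2) (w : Msg L × Msg L) (qq : Q × Q), C.P k qq ≠ 0 →
    retrieved C k qq w = target k w

/-- The average probability of error `P_e`. -/
noncomputable def Pe (C : CodeBase L Q) : ℝ :=
  (1/2) * ∑ k : Fin 2, ∑ w : Msg L × Msg L, ∑ qq : Q × Q,
    ((2:ℝ)^(2*L))⁻¹ * C.P k qq * (if retrieved C k qq w ≠ target k w then 1 else 0)

/-- The retrieval rate `β_n = E[β_n^{(Q_n)}]` (the marginal of `Q_n` is the same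
for `k=1,2` by privacy; we use `k=1`, i.e. index `0`). -/
noncomputable def betaRate (C : CodeBase L Q) (n : Fin 2) : ℝ :=
  ∑ qq : Q × Q, C.P 0 qq * (C.blen n (if n = 0 then qq.1 else qq.2) : ℝ)

/-- A linear PIR code: storage encoders and answer functions are `F_2`-linear. -/
def IsLinear (C : CodeBase L Q) : Prop :=
  (∀ n : Fin 2, IsLinearMap (ZMod 2) (C.phi n)) ∧
  (∀ (n : Fin 2) (q : Q), IsLinearMap (ZMod 2) (C.ans n q))

/-- A bundled PIR code (with its query alphabet). -/
structure Code (L : ℕ) where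
  Q : Type
  [fQ : Fintype Q]
  [dQ : DecidableEq Q]
  base : CodeBase L Q

attribute [instance] Code.fQ Code.dQ

/-- A normalized storage-retrieval pair `(ᾱ, β̄)` is achievable. -/
def Achievable (ab : ℝ × ℝ) : Prop :=
  ∀ ε > (0:ℝ), ∃ L₀ : ℕ, ∀ L ≥ L₀, ∃ C : Code L,
    IsZeroError C.base ∧
    ((C.base.stor 0 + C.base.stor 1 : ℕ) : ℝ) / 2 ≤ L * (ab.1 + ε) ∧
    (betaRate C.base 0 + betaRate C.base 1) / 2 ≤ L * (ab.2 + ε)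

/-- Achievability by linear codes. -/
def LinAchievable (ab : ℝ × ℝ) : Prop :=
  ∀ ε > (0:ℝ), ∃ L₀ : ℕ, ∀ L ≥ L₀, ∃ C : Code L,
    IsZeroError C.base ∧ IsLinear C.base ∧
    ((C.base.stor 0 + C.base.stor 1 : ℕ) : ℝ) / 2 ≤ L * (ab.1 + ε) ∧
    (betaRate C.base 0 + betaRate C.base 1) / 2 ≤ L * (ab.2 + ε)

/-- The achievable storage-retrieval rate region `R`. -/
def Region : Set (ℝ × ℝ) := { ab | Achievable ab }

/-- The query distribution used for the `(2,2)` PIR system: for message 1,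
uniform on `{(1,1),(2,2)}`; for message 2, uniform on `{(1,2),(2,1)}`. -/
noncomputable def stdP : Fin 2 → Fin 2 × Fin 2 → ℝ :=
  fun k qq => if (k = 0 ∧ qq.1 = qq.2) ∨ (k = 1 ∧ qq.1 ≠ qq.2) then 1/2 else 0

/-!
The content of one database together with a single answer of the other determines both messages:
by privacy, the query asked of the other database is also asked when the other message is desired,
and the stored content supplies the answer to whatever query accompanies it in either case.
Counting, then averaging over the query, gives `2 * L ≤ α_m + β_n` for `m ≠ n`. Adding the one with
the databases exchanged and dividing by `2 * L` gives the bound, up to the `ε` of achievability.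
-/

theorem add_length_le_of_injective {F : Type*} [Finite F] [Nontrivial F] {l l' a b : ℕ}
    {f : (Fin l → F) × (Fin l' → F) → (Fin a → F) × (Fin b → F)} (hf : Function.Injective f) :
    l + l' ≤ a + b := by
  have hcard := Nat.card_le_card_of_injective f hf
  simp only [Nat.card_prod, Nat.card_fun, Nat.card_fin, ← pow_add] at hcard
  exact (Nat.pow_le_pow_iff_right Finite.one_lt_card).mp hcard

theorem eq_of_forall_target_eq {w w' : Msg L × Msg L} (h : ∀ k, target k w = target k w') :
    w = w' :=
  Prod.ext (h 0) (h 1)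

/-- The component `Q_n` of a pair of queries that is sent to database `n`. -/
def queryAt {Q : Type*} (n : Fin 2) (qq : Q × Q) : Q := if n = 0 then qq.1 else qq.2

namespace CodeBase

/-- The answer `A_n` that database `n` gives to the query `q` when the messages are `w`. -/
def answer (C : CodeBase L Q) (n : Fin 2) (q : Q) (w : Msg L × Msg L) :
    Fin (C.blen n q) → ZMod 2 :=
  C.ans n q (C.phi n w)

/-- The probability that database `n` receives the query `q` when message `k` is desired. -/
noncomputable def queryMarginal (C : CodeBase L Q) (k n : Fin 2) (q : Q) : ℝ :=
  ∑ qq : Q × Q, if queryAt n qq = q then C.P k qq else 0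

theorem queryMarginal_eq (C : CodeBase L Q) (k k' n : Fin 2) (q : Q) :
    C.queryMarginal k n q = C.queryMarginal k' n q := by
  have hfiber : ((Finset.univ.filter fun w => C.phi n w = C.phi n (0, 0)).card : ℝ) ≠ 0 :=
    Nat.cast_ne_zero.mpr (Finset.card_ne_zero_of_mem (Finset.mem_filter_univ _ |>.mpr rfl))
  have hprivacy : C.queryMarginal 0 n q = C.queryMarginal 1 n q :=
    mul_right_cancel₀ hfiber (C.privacy n q (C.phi n (0, 0)))
  fin_cases k <;> fin_cases k' <;> simp [hprivacy]

theorem queryMarginal_ne_zero_iff (C : CodeBase L Q) {k n : Fin 2} {q : Q} :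
    C.queryMarginal k n q ≠ 0 ↔ ∃ qq, queryAt n qq = q ∧ C.P k qq ≠ 0 := by
  have hnonneg (qq : Q × Q) : 0 ≤ if queryAt n qq = q then C.P k qq else 0 := by
    split_ifs
    exacts [C.P_nonneg k qq, le_rfl]
  simp [queryMarginal, Finset.sum_eq_zero_iff_of_nonneg fun qq _ => hnonneg qq]

end CodeBase

namespace IsZeroError

variable {C : CodeBase L Q}

theorem target_eq_of_answer_eq (hC : IsZeroError C) {k : Fin 2} {qq : Q × Q} (hqq : C.P k qq ≠ 0)
    {w w' : Msg L × Msg L}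
    (h : ∀ n, C.answer n (queryAt n qq) w = C.answer n (queryAt n qq) w') :
    target k w = target k w' := by
  have hretrieved : retrieved C k qq w = retrieved C k qq w' :=
    congrArg₂ (C.dec k qq.1 qq.2) (h 0) (h 1)
  rw [← hC k w qq hqq, hretrieved, hC k w' qq hqq]

theorem injective_phi_prod_answer (hC : IsZeroError C) {m n : Fin 2} (hmn : m ≠ n) {k : Fin 2}
    {q : Q} (hq : C.queryMarginal k n q ≠ 0) :
    Function.Injective fun w => (C.phi m w, C.answer n q w) := by
  intro w w' hww'
  obtain ⟨hphi, hanswer⟩ := Prod.mk.inj hww'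
  refine eq_of_forall_target_eq fun k' => ?_
  obtain ⟨qq, rfl, hqq⟩ := C.queryMarginal_ne_zero_iff.mp (C.queryMarginal_eq k k' n q ▸ hq)
  refine hC.target_eq_of_answer_eq hqq fun i => ?_
  obtain rfl | rfl : i = m ∨ i = n := by omega
  · exact congrArg (C.ans i _) hphi
  · exact hanswer

theorem two_mul_le_stor_add_blen (hC : IsZeroError C) {m n : Fin 2} (hmn : m ≠ n) {k : Fin 2}
    {q : Q} (hq : C.queryMarginal k n q ≠ 0) : 2 * L ≤ C.stor m + C.blen n q :=
  two_mul L ▸ add_length_le_of_injective (hC.injective_phi_prod_answer hmn hq)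

theorem two_mul_le_stor_add_betaRate (hC : IsZeroError C) {m n : Fin 2} (hmn : m ≠ n) :
    2 * (L : ℝ) ≤ C.stor m + betaRate C n := by
  have hpointwise (qq : Q × Q) :
      C.P 0 qq * (2 * L) ≤ C.P 0 qq * (C.stor m + C.blen n (queryAt n qq)) := by
    by_cases hqq : C.P 0 qq = 0
    · simp [hqq]
    · have hblen := hC.two_mul_le_stor_add_blen hmn
        (C.queryMarginal_ne_zero_iff.mpr ⟨qq, rfl, hqq⟩)
      exact mul_le_mul_of_nonneg_left (mod_cast hblen) (C.P_nonneg 0 qq)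
  calc 2 * (L : ℝ) = ∑ qq, C.P 0 qq * (2 * L) := by rw [← Finset.sum_mul, C.P_sum, one_mul]
    _ ≤ ∑ qq, C.P 0 qq * (C.stor m + C.blen n (queryAt n qq)) :=
      Finset.sum_le_sum fun qq _ => hpointwise qq
    _ = C.stor m + betaRate C n := by
      simp only [mul_add, Finset.sum_add_distrib, ← Finset.sum_mul, C.P_sum, one_mul, betaRate,
        queryAt]

end IsZeroError

/-- Every pair `(ᾱ, β̄)` in the achievable storage-retrieval rate region
of the (2,2) PIR problem satisfies `ᾱ + β̄ ≥ 2`. -/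
theorem statement5 (ab : ℝ × ℝ) (h : ab ∈ Region) : 2 ≤ ab.1 + ab.2 := by
  refine le_of_forall_pos_le_add fun ε hε => ?_
  obtain ⟨L₀, hL₀⟩ := h (ε / 2) (half_pos hε)
  obtain ⟨C, hC, hstor, hbeta⟩ := hL₀ (L₀ + 1) L₀.le_succ
  have h01 := hC.two_mul_le_stor_add_betaRate (zero_ne_one (α := Fin 2))
  have h10 := hC.two_mul_le_stor_add_betaRate (one_ne_zero (α := Fin 2))
  have hL : (0 : ℝ) < (L₀ + 1 : ℕ) := mod_cast L₀.succ_pos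
  refine le_of_mul_le_mul_left ?_ hL
  rw [Nat.cast_add] at hstor
  linarith

end PIR
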